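/- arXiv:2507.19293 — 2 statements merged into one kernel-verified Lean document; each statement's English description precedes it below -/
import Mathlib

section
/- Let n ≥ 2 be even. Then there exist two Gray codes for S_{n+1} under adjacent position-swaps: a code G from the word 123⋯(n+1) to the word 213⋯(n+1), and a code H from the word 134⋯(n+1)2 to the word (n+1)12⋯n, such that for each i ∈ [n] the swap of positions (i, i+1) is used the same number of times in H as in G. -/
namespace GrayAux
open Equiv Equiv.Perm

/-- adjacent position swap (trivial when out of range) -/
def sw {N : ℕ} (i : ℕ) : Perm (Fin N) :=
  if h : i + 1 < N then swap ⟨i, by omega⟩ ⟨i + 1, h⟩ else 1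

/-- vertices of the path from `x` following the colour list -/
def vs {N : ℕ} (x : Perm (Fin N)) : List ℕ → List (Perm (Fin N))
  | [] => [x]
  | i :: l => x :: vs (x * sw i) l

/-- end of the path from `x` following the colour list -/
def en {N : ℕ} (x : Perm (Fin N)) : List ℕ → Perm (Fin N)
  | [] => x
  | i :: l => en (x * sw i) l

def HP {N : ℕ} (x y : Perm (Fin N)) (S : Set (Perm (Fin N))) (l : List ℕ) : Prop :=
  en x l = y ∧ (vs x l).Nodup ∧ ∀ σ, σ ∈ vs x l ↔ σ ∈ S

variable {N : ℕ}

theorem vs_append (x : Perm (Fin N)) (l1 l2 : List ℕ) (i : ℕ) :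
    vs x (l1 ++ i :: l2) = vs x l1 ++ vs (en x l1 * sw i) l2 := by
  induction l1 generalizing x with
  | nil => simp [vs, en]
  | cons j l ih => simp [vs, en, ih]

theorem en_append (x : Perm (Fin N)) (l1 l2 : List ℕ) (i : ℕ) :
    en x (l1 ++ i :: l2) = en (en x l1 * sw i) l2 := by
  induction l1 generalizing x with
  | nil => simp [en]
  | cons j l ih => simp [en, ih]

theorem HP.glue {x y z : Perm (Fin N)} {S T : Set (Perm (Fin N))} {l1 l2 : List ℕ} {i : ℕ}
    (h1 : HP x y S l1) (h2 : HP (y * sw i) z T l2) (hd : ∀ σ, σ ∈ S → σ ∈ T → False) :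
    HP x z (S ∪ T) (l1 ++ i :: l2) := by
  obtain ⟨e1, n1, m1⟩ := h1
  obtain ⟨e2, n2, m2⟩ := h2
  refine ⟨by rw [en_append, e1, e2], ?_, ?_⟩
  · rw [vs_append, e1, List.nodup_append]
    refine ⟨n1, n2, ?_⟩
    rintro a ha b hb rfl
    exact hd a ((m1 a).1 ha) ((m2 a).1 hb)
  · intro σ
    rw [vs_append, e1, List.mem_append, m1, m2]; rfl

theorem HP.split {x z : Perm (Fin N)} {S : Set (Perm (Fin N))} {l1 l2 : List ℕ} {i : ℕ}
    (h : HP x z S (l1 ++ i :: l2)) :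
    ∃ S1 S2 : Set (Perm (Fin N)), HP x (en x l1) S1 l1 ∧ HP (en x l1 * sw i) z S2 l2 ∧
      (∀ σ, σ ∈ S1 → σ ∈ S2 → False) ∧ S = S1 ∪ S2 := by
  obtain ⟨e, n, m⟩ := h
  rw [vs_append, List.nodup_append] at n
  refine ⟨{σ | σ ∈ vs x l1}, {σ | σ ∈ vs (en x l1 * sw i) l2}, ⟨rfl, n.1, fun _ => Iff.rfl⟩,
    ⟨by rw [← e, en_append], n.2.1, fun _ => Iff.rfl⟩, ?_, ?_⟩
  · intro σ h1 h2
    exact n.2.2 σ h1 σ h2 rfl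
  · ext σ
    rw [← m, vs_append, List.mem_append]; rfl

theorem HP.mem_start {x y : Perm (Fin N)} {S : Set (Perm (Fin N))} {l : List ℕ}
    (h : HP x y S l) : x ∈ S := by
  rw [← h.2.2]; cases l <;> simp [vs]

theorem en_mem (x : Perm (Fin N)) (l : List ℕ) : en x l ∈ vs x l := by
  induction l generalizing x with
  | nil => simp [en, vs]
  | cons i l ih => simp [en, vs, ih]

theorem HP.mem_end {x y : Perm (Fin N)} {S : Set (Perm (Fin N))} {l : List ℕ}
    (h : HP x y S l) : y ∈ S := by
  rw [← h.2.2, ← h.1]; exact en_mem x l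

theorem HP.congr {x y : Perm (Fin N)} {S T : Set (Perm (Fin N))} {l : List ℕ}
    (h : HP x y S l) (hS : S = T) : HP x y T l := hS ▸ h

theorem sw_eq {i : ℕ} (a b : Fin N) (ha : a.val = i) (hb : b.val = i + 1) :
    (sw i : Perm (Fin N)) = swap a b := by
  subst ha
  have h : a.val + 1 < N := by omega
  rw [sw, dif_pos h]
  congr 1
  exact Fin.ext hb.symm

theorem sw_other {i : ℕ} (j : Fin N) (h1 : j.val ≠ i) (h2 : j.val ≠ i + 1) :
    (sw i : Perm (Fin N)) j = j := by
  unfold sw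
  split_ifs with h
  · apply swap_apply_of_ne_of_ne <;> (intro hh; simp [hh] at h1 h2)
  · rfl

theorem sw_sw (i : ℕ) : (sw i : Perm (Fin N)) * sw i = 1 := by
  unfold sw
  split_ifs with h <;> simp

theorem sign_sw {i : ℕ} (h : i + 1 < N) : sign (sw i : Perm (Fin N)) = -1 := by
  rw [sw, dif_pos h, sign_swap]
  simp [Fin.ext_iff]

def Blk (m : ℕ) (x : Perm (Fin N)) : Set (Perm (Fin N)) :=
  {σ | ∀ i : Fin N, m ≤ i.val → σ i = x i}

def Good (N k : ℕ) (v : ℕ → ℕ) : Prop :=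
  ∀ x y : Perm (Fin N), y ∈ Blk (k + 2) x → sign x ≠ sign y →
    ∃ l, HP x y (Blk (k + 2) x) l ∧ (∀ i, l.count i = v i) ∧
      ∀ d : Fin N, ∃ l1 l2, l = l1 ++ k :: l2 ∧
        ∀ i : Fin N, (i.val = k ∨ i.val = k + 1) → en x l1 i ≠ d

theorem count_glue (l1 l2 : List ℕ) (i j : ℕ) :
    (l1 ++ j :: l2).count i = l1.count i + l2.count i + (if i = j then 1 else 0) := by
  rw [List.count_append, List.count_cons]
  by_cases h : i = j
  · simp [h]; omega
  · simp [h, Ne.symm h]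

theorem sign_ne_trans {a b c : ℤˣ} (h1 : a ≠ b) (h2 : a ≠ c) : b = c := by
  rcases Int.units_eq_one_or a with rfl | rfl <;> rcases Int.units_eq_one_or b with rfl | rfl <;>
  rcases Int.units_eq_one_or c with rfl | rfl <;> simp_all

theorem sign_ne_neg {a b : ℤˣ} (h1 : a ≠ b) : b = -a := by
  rcases Int.units_eq_one_or a with rfl | rfl <;> rcases Int.units_eq_one_or b with rfl | rfl <;>
  simp_all

theorem ne_neg_u (a : ℤˣ) : a ≠ -a := by
  rcases Int.units_eq_one_or a with rfl | rfl <;> decide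

/-- choose an exit vertex -/
theorem exists_exit {k : ℕ} (hk : 1 ≤ k) (B : Fin N) (hB : B.val = k + 1) (u : Perm (Fin N))
    (j : Fin N) (hj : j.val ≤ k + 1) :
    ∃ v ∈ Blk (k + 2) u, v B = u j ∧ sign u ≠ sign v := by
  by_cases h : j = B
  · subst h
    refine ⟨u * sw 0, ?_, ?_, ?_⟩
    · intro i hi
      rw [Perm.mul_apply, sw_other] <;> omega
    · rw [Perm.mul_apply, sw_other] <;> omega
    · rw [Perm.sign_mul, sign_sw (by omega)]
      simp
  · refine ⟨u * swap j B, ?_, ?_, ?_⟩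
    · intro i hi
      rw [Perm.mul_apply, swap_apply_of_ne_of_ne]
      · intro h; subst h; omega
      · intro h; subst h; omega
    · simp
    · rw [Perm.sign_mul, sign_swap h]
      simp

theorem blk_val {m : ℕ} {g u : Perm (Fin N)} (hu : u ∈ Blk m g) {z : Fin N}
    (hz : (g⁻¹ z).val < m) : (u⁻¹ z).val < m := by
  by_contra h
  have h1 := hu (u⁻¹ z) (by omega)
  have h2 : g⁻¹ z = u⁻¹ z := by
    rw [Perm.inv_eq_iff_eq, ← h1]; simp
  rw [h2] at hz
  exact h hz

theorem blk_mem_iff {k : ℕ} (C : Fin N) (hC : C.val = k + 2) {g u : Perm (Fin N)}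
    (hu : u ∈ Blk (k + 3) g) (σ : Perm (Fin N)) :
    σ ∈ Blk (k + 2) u ↔ σ ∈ Blk (k + 3) g ∧ σ C = u C := by
  constructor
  · intro h
    exact ⟨fun i hi => by rw [h i (by omega), hu i hi], h C (by omega)⟩
  · rintro ⟨h1, h2⟩ i hi
    by_cases hh : i = C
    · rw [hh, h2]
    · have : i.val ≠ C.val := fun h => hh (Fin.ext h)
      rw [h1 i (by omega), hu i (by omega)]

theorem chain {k : ℕ} (hk : 3 ≤ k) {v : ℕ → ℕ} (hg : Good N k v)
    (B C : Fin N) (hB : B.val = k + 1) (hC : C.val = k + 2) (g : Perm (Fin N)) :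
    ∀ (K : List (Fin N)) (u w : Perm (Fin N)), K.Nodup → (∀ z ∈ K, (g⁻¹ z).val < k + 3) →
      u ∈ Blk (k + 3) g → w ∈ Blk (k + 3) g → K.head? = some (u C) → K.getLast? = some (w C) →
      sign u ≠ sign w →
      ∃ l, HP u w {σ | σ ∈ Blk (k + 3) g ∧ σ C ∈ K} l ∧
        ∀ i, l.count i + (if i = k + 1 then 1 else 0)
          = K.length * (v i + if i = k + 1 then 1 else 0) := by
  intro K
  induction K with
  | nil => intro u w _ _ _ _ h; simp at h
  | cons a K ih =>
    intro u w hn hK hu hw hh hl hs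
    have ha : a = u C := by simpa using hh
    subst ha
    cases K with
    | nil =>
      have hl' : u C = w C := by simpa using hl
      obtain ⟨l, h1, h2, -⟩ := hg u w ((blk_mem_iff C hC hu w).2 ⟨hw, hl'.symm⟩) hs
      refine ⟨l, h1.congr ?_, fun i => by rw [h2]; simp⟩
      ext σ
      rw [blk_mem_iff C hC hu]; simp
    | cons b K =>
      have hb : (u⁻¹ b).val < k + 3 := blk_val hu (hK b (by simp))
      have hbC : u⁻¹ b ≠ C := by
        intro h
        rw [Perm.inv_eq_iff_eq] at h
        simp [h] at hn
      have hbC' : (u⁻¹ b).val ≠ C.val := fun h => hbC (Fin.ext h)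
      obtain ⟨e, he, heB, hes⟩ := exists_exit (by omega) B hB u (u⁻¹ b) (by omega)
      have heB' : e B = b := by rw [heB]; simp
      obtain ⟨l1, h1, c1, -⟩ := hg u e he hes
      have heb := (blk_mem_iff C hC hu e).1 he
      have hsw : (sw (k + 1) : Perm (Fin N)) = swap B C := sw_eq B C hB hC
      have hs2 : sign (e * sw (k + 1)) = sign u := by
        rw [Perm.sign_mul, sign_sw (by omega), sign_ne_neg hes]; simp
      obtain ⟨l2, h2, c2⟩ := ih (e * sw (k + 1)) w (List.nodup_cons.1 hn).2
        (fun z hz => hK z (List.mem_cons_of_mem _ hz))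
        (by
          intro i hi
          rw [Perm.mul_apply, sw_other _ (by omega) (by omega)]
          exact heb.1 i hi) hw
        (by rw [hsw]; simp [heB']) (by simpa using hl)
        (by rw [hs2]; exact hs)
      refine ⟨l1 ++ (k + 1) :: l2, (h1.glue h2 ?_).congr ?_, ?_⟩
      · intro σ hσ1 hσ2
        rw [blk_mem_iff C hC hu] at hσ1
        rw [← hσ1.2] at hn
        exact (List.nodup_cons.1 hn).1 hσ2.2
      · ext σ
        rw [Set.mem_union, blk_mem_iff C hC hu]
        simp only [Set.mem_ofPred_eq, List.mem_cons]
        tauto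
      · intro i
        have := c2 i
        rw [count_glue, c1, List.length_cons, Nat.succ_mul, ← this]
        omega

theorem blk_swap {k : ℕ} {g u : Perm (Fin N)} (hu : u ∈ Blk (k + 3) g) :
    u * sw (k + 1) ∈ Blk (k + 3) g := by
  intro i hi
  rw [Perm.mul_apply, sw_other _ (by omega) (by omega)]
  exact hu i hi

theorem prop_aux {s1 s2 b q l c : Prop} (h : s1 ∨ s2 ↔ b ∧ c) :
    (s1 ∨ (b ∧ q) ∨ (b ∧ l) ∨ s2) ↔ b ∧ ((l ∨ q) ∨ c) := by tauto

set_option maxHeartbeats 1000000 in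
theorem fat {k : ℕ} (hk : 3 ≤ k) {v : ℕ → ℕ} (hg : Good N k v)
    (B C : Fin N) (hB : B.val = k + 1) (hC : C.val = k + 2)
    (x y : Perm (Fin N)) (hxy : y ∈ Blk (k + 2) x) (hs : sign x ≠ sign y) (d : Fin N)
    (K : Finset (Fin N)) (hK : ∀ z, z ∈ K ↔ (x⁻¹ z).val < k + 3 ∧ z ≠ x C ∧ z ≠ d)
    (hKc : 3 ≤ K.card) :
    ∃ l, HP x y {σ | σ ∈ Blk (k + 3) x ∧ (σ C ∈ K ∨ σ C = x C)} l ∧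
      (∀ i, l.count i + (if i = k then 1 else 0)
          = (K.card + 1) * (v i + if i = k + 1 then 1 else 0)) ∧
      ∀ e : Fin N, ∃ l1 l2, l = l1 ++ (k + 1) :: l2 ∧
        ∀ i : Fin N, (i.val = k + 1 ∨ i.val = k + 2) → en x l1 i ≠ e := by
  obtain ⟨l, hl, hc, ha⟩ := hg x y hxy hs
  obtain ⟨l1, l2, rfl, hd⟩ := ha d
  obtain ⟨S1, S2, h1, h2, hdis, hS⟩ := hl.split
  have hxx : x ∈ Blk (k + 3) x := fun _ _ => rfl
  obtain ⟨A, hA⟩ : ∃ A : Fin N, A.val = k := ⟨⟨k, by omega⟩, rfl⟩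
  set p := en x l1 with hp
  have hpm : p ∈ Blk (k + 2) x := by
    rw [hS]; exact Or.inl h1.mem_end
  have hqm : p * sw k ∈ Blk (k + 2) x := by
    rw [hS]; exact Or.inr h2.mem_start
  have hp3 := (blk_mem_iff C hC hxx p).1 hpm
  have hq3 := (blk_mem_iff C hC hxx _).1 hqm
  have hswA : (sw k : Perm (Fin N)) = swap A B := sw_eq A B hA hB
  have hswB : (sw (k + 1) : Perm (Fin N)) = swap B C := sw_eq B C hB hC
  have hAB : A ≠ B := fun h => by rw [h] at hA; omega
  have hBC : B ≠ C := fun h => by rw [h] at hB; omega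
  have hAC : A ≠ C := fun h => by rw [h] at hA; omega
  have hqB : (p * sw k : Perm (Fin N)) B = p A := by rw [hswA]; simp
  -- the two neighbouring block values
  have hab : p A ≠ p B := fun h => hAB (p.injective h)
  have hKa : p A ∈ K := by
    rw [hK]
    refine ⟨?_, ?_, hd A (Or.inl hA)⟩
    · have : x ∈ Blk (k + 3) p := fun i hi => (hp3.1 i hi).symm
      apply blk_val this
      simp; omega
    · rw [← hp3.2]; exact fun h => hAC (p.injective h)
  have hKb : p B ∈ K := by
    rw [hK]
    refine ⟨?_, ?_, hd B (Or.inr hB)⟩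
    · have : x ∈ Blk (k + 3) p := fun i hi => (hp3.1 i hi).symm
      apply blk_val this
      simp; omega
    · rw [← hp3.2]; exact fun h => hBC (p.injective h)
  obtain ⟨K', hK'⟩ : ∃ K', K' = (K.erase (p A)).erase (p B) := ⟨_, rfl⟩
  have hK'm : ∀ z, z ∈ K' ↔ z ≠ p B ∧ z ≠ p A ∧ z ∈ K := by
    intro z; rw [hK', Finset.mem_erase, Finset.mem_erase]
  have hK'c : K'.card + 2 = K.card := by
    have e1 := Finset.card_erase_of_mem hKa
    have e2 := Finset.card_erase_of_mem (Finset.mem_erase.2 ⟨hab.symm, hKb⟩)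
    rw [hK']; omega
  obtain ⟨z, R, hzR⟩ : ∃ z R, K'.toList = z :: R := by
    cases hh : K'.toList with
    | nil =>
      have := Finset.length_toList K'
      rw [hh] at this; simp at this; omega
    | cons z R => exact ⟨z, R, rfl⟩
  have hzRm : ∀ t, t ∈ z :: R ↔ t ≠ p B ∧ t ≠ p A ∧ t ∈ K := by
    intro t; rw [← hzR, Finset.mem_toList, hK'm]
  have hzRn : (z :: R).Nodup := hzR ▸ Finset.nodup_toList K'
  have hzRl : (z :: R).length + 2 = K.card := by
    rw [← hzR, Finset.length_toList, hK'c]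
  have hz := (hzRm z).1 (by simp)
  -- the vertex u
  obtain ⟨u, hu⟩ : ∃ u, u = p * sw (k + 1) := ⟨_, rfl⟩
  have hu3 : u ∈ Blk (k + 3) x := hu ▸ blk_swap hp3.1
  have huC : u C = p B := by rw [hu, hswB]; simp
  have huB : u B = x C := by rw [hu, hswB]; simp [hp3.2]
  have hus : sign u = - sign p := by rw [hu, Perm.sign_mul, sign_sw (by omega)]; simp
  obtain ⟨w, hw⟩ : ∃ w, w = p * sw k * sw (k + 1) := ⟨_, rfl⟩
  have hw3 : w ∈ Blk (k + 3) x := hw ▸ blk_swap hq3.1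
  have hwC : w C = p A := by rw [hw, hswB, Perm.mul_apply, swap_apply_right, hqB]
  have hwB : w B = x C := by rw [hw, hswB, Perm.mul_apply, swap_apply_left, hq3.2]
  have hws : sign w = sign p := by
    rw [hw, Perm.sign_mul, Perm.sign_mul, sign_sw (by omega), sign_sw (by omega)]; simp
  have hwq : w * sw (k + 1) = p * sw k := by rw [hw, mul_assoc, sw_sw, mul_one]
  -- the block of u
  have hzu : (u⁻¹ z).val < k + 3 := blk_val hu3 ((hK z).1 hz.2.2).1
  have hzC : (u⁻¹ z).val ≠ C.val := by
    intro h
    have h := Fin.ext h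
    rw [Perm.inv_eq_iff_eq, huC] at h
    exact hz.1 h
  obtain ⟨e, he, heB, hes⟩ := exists_exit (by omega) B hB u (u⁻¹ z) (by omega)
  have heB' : e B = z := by rw [heB]; simp
  have he3 := (blk_mem_iff C hC hu3 e).1 he
  obtain ⟨lb, hb, cb, -⟩ := hg u e he hes
  have hsgn : sign (e * sw (k + 1)) ≠ sign w := by
    rw [Perm.sign_mul, sign_sw (by omega), sign_ne_neg hes, hus, hws]
    simp
  have hR : ∀ t ∈ (z :: R) ++ [p A], t ≠ p B ∧ t ∈ K := by
    intro t ht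
    rw [List.mem_append] at ht
    rcases ht with ht | ht
    · exact ⟨((hzRm t).1 ht).1, ((hzRm t).1 ht).2.2⟩
    · rw [List.mem_singleton] at ht
      subst ht
      exact ⟨hab, hKa⟩
  obtain ⟨lc, hcp, cc⟩ := chain hk hg B C hB hC x ((z :: R) ++ [p A]) (e * sw (k + 1)) w
    (by
      rw [List.nodup_append]
      refine ⟨hzRn, by simp, ?_⟩
      intro a h1 b h2 hab'
      rw [List.mem_singleton] at h2
      exact ((hzRm a).1 h1).2.1 (by rw [hab', h2]))
    (fun t ht => ((hK t).1 (hR t ht).2).1)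
    (blk_swap he3.1) hw3 (by rw [hswB]; simp [heB']) (by rw [hwC]; exact List.getLast?_concat) hsgn
  have hS1 : ∀ σ, σ ∈ S1 → σ C = x C := fun σ h => by
    have : σ ∈ Blk (k + 2) x := by rw [hS]; exact Or.inl h
    exact this C (by omega)
  have hS2 : ∀ σ, σ ∈ S2 → σ C = x C := fun σ h => by
    have : σ ∈ Blk (k + 2) x := by rw [hS]; exact Or.inr h
    exact this C (by omega)
  have f1 := hcp.glue (i := k + 1) (by rw [hwq]; exact h2) (by
      intro σ hσ1 hσ2
      have h3 := (hR _ hσ1.2).2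
      rw [hS2 σ hσ2] at h3
      exact ((hK _).1 h3).2.1 rfl)
  have f2 := hb.glue f1 (by
      intro σ hσ1 hσ2
      rw [blk_mem_iff C hC hu3, huC] at hσ1
      rcases hσ2 with h3 | h3
      · exact (hR _ h3.2).1 hσ1.2
      · have := hS2 σ h3
        rw [hσ1.2] at this
        exact ((hK _).1 hKb).2.1 this)
  rw [hu] at f2
  have f3 := h1.glue f2 (by
      intro σ hσ1 hσ2
      rw [← hu] at hσ2
      have h0 := hS1 σ hσ1
      rcases hσ2 with h3 | h3 | h3
      · rw [blk_mem_iff C hC hu3, huC, h0] at h3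
        exact ((hK _).1 hKb).2.1 h3.2.symm
      · have h3 := (hR _ h3.2).2
        rw [h0] at h3
        exact ((hK _).1 h3).2.1 rfl
      · exact hdis σ hσ1 h3)
  rw [← hu] at f3
  refine ⟨_, f3.congr ?_, ?_, ?_⟩
  · ext σ
    have key : σ ∈ S1 ∨ σ ∈ S2 ↔ σ ∈ Blk (k + 3) x ∧ σ C = x C := by
      rw [← blk_mem_iff C hC hxx, hS]; rfl
    have key2 : σ C ∈ z :: R ++ [p A] ∨ σ C = p B ↔ σ C ∈ K := by
      rw [List.mem_append, hzRm, List.mem_singleton]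
      constructor
      · rintro ((h | h) | h)
        · exact h.2.2
        · rw [h]; exact hKa
        · rw [h]; exact hKb
      · intro h; tauto
    simp only [Set.mem_union, Set.mem_ofPred_eq]
    rw [blk_mem_iff C hC hu3, huC, ← key2]
    exact prop_aux key
  · intro i
    have e1 := cc i
    have e2 := hc i
    have e3 := cb i
    rw [count_glue] at e2
    rw [count_glue, count_glue, count_glue, e3]
    rw [List.length_append, List.length_singleton] at e1
    have e4 : K.card + 1 = ((z :: R).length + 1) + 1 + 1 := by omega
    rw [e4, Nat.succ_mul, Nat.succ_mul, ← e1]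
    omega
  · intro t
    have d1 : en x l1 = p := rfl
    have d2 : en x (l1 ++ (k + 1) :: lb) = e := by rw [en_append, d1, ← hu, hb.1]
    have d3 : en x (l1 ++ (k + 1) :: (lb ++ (k + 1) :: lc)) = w := by
      rw [en_append, d1, ← hu, en_append, hb.1, hcp.1]
    have hval : ∀ (f : Perm (Fin N)), f B ≠ t → f C ≠ t →
        ∀ i : Fin N, (i.val = k + 1 ∨ i.val = k + 2) → f i ≠ t := by
      intro f h1 h2 i hi
      rcases hi with hi | hi
      · rwa [show i = B from Fin.ext (by omega)]
      · rwa [show i = C from Fin.ext (by omega)]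
    by_cases ht1 : t = p B
    · refine ⟨l1 ++ (k + 1) :: (lb ++ (k + 1) :: lc), l2, by simp, ?_⟩
      rw [d3]
      apply hval
      · rw [hwB, ht1]; exact ((hK _).1 hKb).2.1.symm
      · rw [hwC, ht1]; exact hab
    · by_cases ht2 : t = x C
      · refine ⟨l1 ++ (k + 1) :: lb, _, by simp; rfl, ?_⟩
        rw [d2]
        apply hval
        · rw [heB', ht2]; exact ((hK _).1 hz.2.2).2.1
        · rw [he3.2, huC]; exact Ne.symm ht1
      · refine ⟨l1, _, rfl, ?_⟩
        rw [d1]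
        apply hval
        · exact Ne.symm ht1
        · rw [hp3.2]; exact Ne.symm ht2

theorem card_vals {m : ℕ} (hm : m ≤ N) (x : Perm (Fin N)) :
    (Finset.univ.filter (fun z : Fin N => (x⁻¹ z).val < m)).card = m := by
  have : Finset.univ.filter (fun z : Fin N => (x⁻¹ z).val < m)
      = (Finset.univ.filter (fun z : Fin N => z.val < m)).map x.toEmbedding := by
    ext z
    simp only [Finset.mem_filter, Finset.mem_univ, true_and, Finset.mem_map_equiv]
    rfl
  rw [this, Finset.card_map, Fin.card_filter_val_lt]
  omega

theorem step {k : ℕ} (hk : 3 ≤ k) (hN : k + 3 ≤ N) {v : ℕ → ℕ} (hg : Good N k v) :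
    Good N (k + 1) (fun i => (k + 3) * (v i + if i = k + 1 then 1 else 0)
      - (if i = k then 1 else 0)) := by
  intro x y hxy hs
  obtain ⟨B, hB⟩ : ∃ B : Fin N, B.val = k + 1 := ⟨⟨k + 1, by omega⟩, rfl⟩
  obtain ⟨C, hC⟩ : ∃ C : Fin N, C.val = k + 2 := ⟨⟨k + 2, by omega⟩, rfl⟩
  have hxx : x ∈ Blk (k + 3) x := fun _ _ => rfl
  have hswB : (sw (k + 1) : Perm (Fin N)) = swap B C := sw_eq B C hB hC
  obtain ⟨V, hV⟩ : ∃ V, V = Finset.univ.filter (fun z : Fin N => (x⁻¹ z).val < k + 3) := ⟨_, rfl⟩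
  have hVc : V.card = k + 3 := by rw [hV]; exact card_vals hN x
  have hVm : ∀ z, z ∈ V ↔ (x⁻¹ z).val < k + 3 := by intro z; rw [hV]; simp
  have hxV : x C ∈ V := by rw [hVm]; simp; omega
  by_cases h : y C = x C
  · have hKc : (V.erase (x C)).card = k + 2 := by
      rw [Finset.card_erase_of_mem hxV]; omega
    obtain ⟨l, h1, h2, h3⟩ := fat hk hg B C hB hC x y
      ((blk_mem_iff C hC hxx y).2 ⟨hxy, h⟩) hs (x C) (V.erase (x C))
      (by intro z; rw [Finset.mem_erase, hVm]; tauto) (by omega)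
    refine ⟨l, h1.congr ?_, ?_, h3⟩
    · ext σ
      simp only [Set.mem_ofPred_eq]
      constructor
      · exact fun h => h.1
      · intro hσ
        refine ⟨hσ, ?_⟩
        by_cases h : σ C = x C
        · exact Or.inr h
        · left
          rw [Finset.mem_erase, hVm]
          refine ⟨h, blk_val (g := σ) (fun i hi => (hσ i hi).symm) ?_⟩
          simp; omega
    · intro i
      have := h2 i
      rw [hKc] at this
      show _ = (k + 3) * _ - _
      rw [show k + 3 = k + 2 + 1 from rfl]
      omega
  · have hyV : y C ∈ V := by
      rw [hVm]
      apply blk_val (g := y) (fun i hi => (hxy i hi).symm)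
      simp; omega
    have hKc : ((V.erase (x C)).erase (y C)).card = k + 1 := by
      rw [Finset.card_erase_of_mem (Finset.mem_erase.2 ⟨h, hyV⟩),
        Finset.card_erase_of_mem hxV]; omega
    have hyj : (x⁻¹ (y C)).val ≠ C.val := by
      intro hh
      have hh := Fin.ext hh
      rw [Perm.inv_eq_iff_eq] at hh
      exact h hh
    have hyj2 := (hVm _).1 hyV
    obtain ⟨e, he, heB, hes⟩ := exists_exit (by omega) B hB x (x⁻¹ (y C)) (by omega)
    have heB' : e B = y C := by rw [heB]; simp
    have he3 := (blk_mem_iff C hC hxx e).1 he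
    obtain ⟨l, h1, h2, h3⟩ := fat hk hg B C hB hC x e he hes (y C)
      ((V.erase (x C)).erase (y C))
      (by intro z; rw [Finset.mem_erase, Finset.mem_erase, hVm]; tauto) (by omega)
    have hf3 : e * sw (k + 1) ∈ Blk (k + 3) x := blk_swap he3.1
    have hfC : (e * sw (k + 1) : Perm (Fin N)) C = y C := by rw [hswB]; simp [heB']
    obtain ⟨l', h1', h2', -⟩ := hg (e * sw (k + 1)) y
      ((blk_mem_iff C hC hf3 y).2 ⟨hxy, hfC.symm⟩) (by
        rw [Perm.sign_mul, sign_sw (by omega), sign_ne_neg hes]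
        simpa using hs)
    refine ⟨l ++ (k + 1) :: l', (h1.glue h1' ?_).congr ?_, ?_, ?_⟩
    · intro σ hσ1 hσ2
      rw [blk_mem_iff C hC hf3, hfC] at hσ2
      rcases hσ1.2 with h4 | h4
      · rw [hσ2.2] at h4; simp at h4
      · rw [hσ2.2] at h4; exact h h4
    · ext σ
      rw [Set.mem_union, blk_mem_iff C hC hf3, hfC]
      simp only [Set.mem_ofPred_eq]
      constructor
      · rintro (h | h)
        · exact h.1
        · exact h.1
      · intro hσ
        by_cases h : σ C = x C
        · exact Or.inl ⟨hσ, Or.inr h⟩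
        by_cases h' : σ C = y C
        · exact Or.inr ⟨hσ, h'⟩
        left
        refine ⟨hσ, Or.inl ?_⟩
        rw [Finset.mem_erase, Finset.mem_erase, hVm]
        refine ⟨h', h, blk_val (g := σ) (fun i hi => (hσ i hi).symm) ?_⟩
        simp; omega
    · intro i
      have e1 := h2 i
      have e2 := h2' i
      rw [hKc] at e1
      rw [count_glue, e2]
      show _ = (k + 3) * _ - _
      rw [show k + 3 = k + 1 + 1 + 1 from rfl, Nat.succ_mul, ← e1]
      omega
    · intro t
      obtain ⟨l1, l2, rfl, h5⟩ := h3 t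
      exact ⟨l1, l2 ++ (k + 1) :: l', by simp, h5⟩

/-! ### The base case: Hamilton paths in `S_5`, encoded in base 4 -/

abbrev Tup := ℕ × ℕ × ℕ × ℕ × ℕ

def stp : ℕ → Tup → Tup
  | 0, (a, b, c, d, e) => (b, a, c, d, e)
  | 1, (a, b, c, d, e) => (a, c, b, d, e)
  | 2, (a, b, c, d, e) => (a, b, d, c, e)
  | 3, (a, b, c, d, e) => (a, b, c, e, d)
  | _, t => t

def tup (σ : Perm (Fin 5)) : Tup :=
  ((σ 0).val, (σ 1).val, (σ 2).val, (σ 3).val, (σ 4).val)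

def cod (t : Tup) : ℕ :=
  t.1 + 5 * t.2.1 + 25 * t.2.2.1 + 125 * t.2.2.2.1 + 625 * t.2.2.2.2

def enT : Tup → List ℕ → Tup
  | t, [] => t
  | t, i :: l => enT (stp i t) l

def chk : Tup → ℕ → List ℕ → Bool
  | t, m, [] => !(m.testBit (cod t))
  | t, m, i :: l => !(m.testBit (cod t)) && chk (stp i t) (m ||| 2 ^ cod t) l

def avd (d : ℕ) : Tup → List ℕ → Bool
  | _, [] => false
  | t, i :: l => (i == 3 && t.2.2.2.1 != d && t.2.2.2.2 != d) || avd d (stp i t) l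

def dec : ℕ → ℕ → List ℕ
  | 0, _ => []
  | f + 1, n => (n % 4) :: dec f (n / 4)

def okl (c : ℕ) (l : List ℕ) : Bool :=
  chk (0, 1, 2, 3, 4) 0 l && (cod (enT (0, 1, 2, 3, 4) l) == c)
    && (l.count 0 == 38) && (l.count 1 == 38) && (l.count 2 == 38) && (l.count 3 == 5)
    && avd 0 (0, 1, 2, 3, 4) l && avd 1 (0, 1, 2, 3, 4) l && avd 2 (0, 1, 2, 3, 4) l
    && avd 3 (0, 1, 2, 3, 4) l && avd 4 (0, 1, 2, 3, 4) l

def table : List (ℕ × ℕ) := [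
  (2430, 263294880975203811502500384631587271180988813659952372880200547099373857),
  (2830, 124902315559005795001263179752879846051824715366384731322537925324345880),
  (1730, 29555712218511000650429313830627166546411165432296624945874984220330278),
  (2910, 43358809894718432230401270546116982955552877882740295979916612889840052),
  (1210, 44113885903614509289002667679865187211535836914138075635692216886002884),
  (2110, 42395163032946679179004803854221351831178314407321175326253896767514438),
  (1790, 57863668463886690360829650374872677388062585310073204907707785307851041),
  (2690, 57198117132869855188000062800567116703624780456865878459065326899703177),
  (990, 57967927629437446209419211622022465858818622573219666212333811099116647),
  (2170, 57165449560616813009493993710199942065586524593670077748266466788118817),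
  (1070, 236508722793440917105065477613636976813462873457156505186888624079225928),
  (1470, 169755872115732331557326938202278726875104396203196582619560345313495108),
  (2926, 173435239578898092737002318796638101714241990612753962491785241664440529),
  (1826, 57863668463887309930957008274589177836251930679479633598462677800732205),
  (2226, 169781274711437430033986003575056772953796064242400330216736623094434916),
  (2386, 124907283306314264262453400477255856003956727346110791546500307192224054),
  (2586, 29699029755132705319250180150080086990645242365563008459418587552434449),
  (486, 42395163032946392914810433391565365455867501007601494203337296722106466),
  (2766, 251648159718086677253798781710389289526392427212016661119158228250562953),
  (566, 263294880975203811502501976418108953908483496043864228120554129919977031),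
  (1366, 124893858664621644365779755180293517178156081912922160402158269269878310),
  (1646, 57965788002962345132959137797234897032846145373018453352938380033362209),
  (1946, 173030840385724294943520169057074459897888782309314037952694178538425160),
  (346, 173437379249850866122600504007946524437004054068970426460502941862358289),
  (2402, 57061387129879347699964394714045880329150877934834235404983791201425590),
  (2702, 345749741761877916436895992875940363174757796975434616416272710218359065),
  (1102, 31181867707448760210711207249074739261531297186096413881831394988295266),
  (2882, 263590933560278271550791355755335287608883584256805549827826969420570913),
  (582, 173017360404230887829086444624621626513550723414294170706554419862673506),
  (1982, 29555712250945147798760535605761255218414511304995474096827548337202758),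
  (1142, 124693242246154721114712266228393001557690997450088938367152915437160732),
  (2542, 263590933560278271503251718718332955754526995629834849328103053764879492),
  (242, 237309073480441751961719747399814695185801419923540794796805574798947912),
  (2022, 237413122943779063734847045200128538233857279873875914948182705880305953),
  (422, 173030840385724695404982192017833368003844571052561731614237151700854343),
  (722, 173030840385724511385316337890440275798057992740486557908346503418206353),
  (2778, 57070107348785869657111175955003761067419952890851999301580492911289954),
  (1178, 44116835374091797273665579954845111283409085914595362408802007508345416),
  (1478, 264918798545458662561396028618888908244654430582432857404953556796148001),
  (1758, 264918996138245241016247060473716354180962878227701904777685478153525325),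
  (2558, 196821737572036859178746369403123080323136768298444546518768637782140488),
  (358, 31179641591399914226400222757580905786830083494639476844575997236627729),
  (2638, 117984337395870780382202245341070635094955614931553064077478800824391825),
  (538, 250357675422311363533876795988676525970874485300756730523159942173071515),
  (738, 176490173509801530961582924000039349930107046986861084886887206700213836),
  (898, 236610842332680200818602770011875314177531075547200158673250926678582343),
  (1298, 29555514658158204479435454071394138650382969618064667524326416629991718),
  (198, 31179629821200678333744577908023631522477334973546284944327476424285252),
  (1654, 117984337319198488332152743775744414044476184779550199461258236034883985),
  (2054, 117983947733993418211825149630772384784582542594677546868297342483047558),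
  (954, 169781225742812949579237957419538627517028679464972111187018246778276113),
  (2134, 251220170694058280675412443973124223608553450653575079835044245419397657),
  (434, 263294881449494516924169104048381200594512887959089787116385808947896930),
  (1334, 117987299139070526910912223069399440168901829122275383052204498480566808),
  (1014, 236506583123246192489890293941202414553262078821391886923602199163735138),
  (1914, 121267644054898257731977482236453818631398841928845219531425782387853410),
  (214, 264919188130664804491417028220614796376612002879587344248247947319461960),
  (1394, 57061387852788218482117599956742199610563193405700121176870605705856612),
  (294, 264919188130665044851755175258447954723861263153971135866843981004480913),
  (694, 173017302463179283460500933479160285978698271240597964283916558322966817)]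

theorem table_ok : (table.all fun p => okl p.1 (dec 119 p.2)) = true := by decide +kernel

theorem table_surj : ∀ g : Perm (Fin 5), sign g = -1 →
    (table.any fun p => p.1 == cod (tup g)) = true := by decide +kernel

theorem tup_sw (σ : Perm (Fin 5)) (i : ℕ) : tup (σ * sw i) = stp i (tup σ) := by
  match i with
  | 0 => rw [sw_eq (i := 0) 0 1 rfl rfl]; rfl
  | 1 => rw [sw_eq (i := 1) 1 2 rfl rfl]; rfl
  | 2 => rw [sw_eq (i := 2) 2 3 rfl rfl]; rfl
  | 3 => rw [sw_eq (i := 3) 3 4 rfl rfl]; rfl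
  | n + 4 =>
    have : (sw (n + 4) : Perm (Fin 5)) = 1 := by
      rw [sw, dif_neg (by omega)]
    rw [this]; rfl

theorem tup_en (σ : Perm (Fin 5)) (l : List ℕ) : tup (en σ l) = enT (tup σ) l := by
  induction l generalizing σ with
  | nil => rfl
  | cons i l ih => rw [en, enT, ih, tup_sw]

theorem cod_inj {σ τ : Perm (Fin 5)} (h : cod (tup σ) = cod (tup τ)) : σ = τ := by
  simp only [cod, tup] at h
  ext i
  fin_cases i <;> simp <;> omega

theorem chk_spec (σ : Perm (Fin 5)) (m : ℕ) (l : List ℕ) (h : chk (tup σ) m l = true) :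
    (vs σ l).Nodup ∧ ∀ τ ∈ vs σ l, m.testBit (cod (tup τ)) = false := by
  induction l generalizing σ m with
  | nil => simpa [chk, vs] using h
  | cons i l ih =>
    simp only [chk, Bool.and_eq_true, Bool.not_eq_true', ← tup_sw] at h
    obtain ⟨h1, h2⟩ := ih _ _ h.2
    simp only [Nat.testBit_or, Bool.or_eq_false_iff, Nat.testBit_two_pow] at h2
    refine ⟨?_, ?_⟩
    · rw [vs, List.nodup_cons]
      refine ⟨fun hm => ?_, h1⟩
      have := (h2 σ hm).2
      simp at this
    · intro τ hτ
      rw [vs, List.mem_cons] at hτ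
      rcases hτ with rfl | hτ
      · exact h.1
      · exact (h2 τ hτ).1

theorem avd_spec (d : ℕ) (σ : Perm (Fin 5)) (l : List ℕ) (h : avd d (tup σ) l = true) :
    ∃ l1 l2, l = l1 ++ 3 :: l2 ∧ ((en σ l1) 3).val ≠ d ∧ ((en σ l1) 4).val ≠ d := by
  induction l generalizing σ with
  | nil => simp [avd] at h
  | cons i l ih =>
    simp only [avd, Bool.or_eq_true, Bool.and_eq_true, ← tup_sw] at h
    rcases h with h | h
    · refine ⟨[], l, ?_, ?_⟩
      · simpa using h.1.1
      · have h1 := h.1.2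
        have h2 := h.2
        rw [bne_iff_ne] at h1 h2
        exact ⟨h1, h2⟩
    · obtain ⟨l1, l2, rfl, h3⟩ := ih _ h
      exact ⟨i :: l1, l2, rfl, h3⟩

theorem dec_length (f n : ℕ) : (dec f n).length = f := by
  induction f generalizing n with
  | zero => rfl
  | succ f ih => simp [dec, ih]

theorem dec_lt (f n : ℕ) : ∀ i ∈ dec f n, i < 4 := by
  induction f generalizing n with
  | zero => simp [dec]
  | succ f ih =>
    intro i hi
    rw [dec, List.mem_cons] at hi
    rcases hi with rfl | hi
    · omega
    · exact ih _ i hi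

theorem vs_length (x : Perm (Fin N)) (l : List ℕ) : (vs x l).length = l.length + 1 := by
  induction l generalizing x with
  | nil => rfl
  | cons i l ih => simp [vs, ih]

def v5 (i : ℕ) : ℕ := if i < 3 then 38 else if i = 3 then 5 else 0

theorem base5 (g : Perm (Fin 5)) (hg : sign g = -1) :
    ∃ l : List ℕ, en 1 l = g ∧ (vs (1 : Perm (Fin 5)) l).Nodup ∧ (∀ σ, σ ∈ vs (1 : Perm (Fin 5)) l) ∧
      (∀ i ∈ l, i < 4) ∧ (∀ i, l.count i = v5 i) ∧
      ∀ d : Fin 5, ∃ l1 l2, l = l1 ++ 3 :: l2 ∧ (en 1 l1) 3 ≠ d ∧ (en 1 l1) 4 ≠ d := by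
  have h1 := table_surj g hg
  rw [List.any_eq_true] at h1
  obtain ⟨⟨c, n⟩, hmem, hc⟩ := h1
  have h2 := table_ok
  rw [List.all_eq_true] at h2
  have h3 := h2 _ hmem
  have hlt := dec_lt 119 n
  have hlen := dec_length 119 n
  simp only at h3 hc
  generalize dec 119 n = l at h3 hlt hlen
  have ht : ((0, 1, 2, 3, 4) : Tup) = tup 1 := rfl
  simp only [okl, Bool.and_eq_true, beq_iff_eq, ht, ← tup_en] at h3 hc
  obtain ⟨⟨⟨⟨⟨⟨⟨⟨⟨⟨k1, k2⟩, c0⟩, c1⟩, c2⟩, c3⟩, a0⟩, a1⟩, a2⟩, a3⟩, a4⟩ := h3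
  have hn := (chk_spec 1 0 l k1).1
  refine ⟨l, cod_inj (by rw [k2, hc]), hn, ?_, hlt, ?_, ?_⟩
  · have hcard : (vs (1 : Perm (Fin 5)) l).toFinset.card = Fintype.card (Perm (Fin 5)) := by
      rw [List.toFinset_card_of_nodup hn, vs_length, hlen, Fintype.card_perm, Fintype.card_fin]
      rfl
    intro σ
    rw [← List.mem_toFinset, (Finset.card_eq_iff_eq_univ _).1 hcard]
    exact Finset.mem_univ σ
  · intro i
    match i with
    | 0 => exact c0
    | 1 => exact c1
    | 2 => exact c2
    | 3 => exact c3
    | n + 4 =>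
      rw [List.count_eq_zero_of_not_mem]
      · rfl
      · intro h; have := hlt _ h; omega
  · intro d
    have key : avd d.val (tup 1) l = true := by
      fin_cases d
      · exact a0
      · exact a1
      · exact a2
      · exact a3
      · exact a4
    obtain ⟨l1, l2, e, p, q⟩ := avd_spec _ _ _ key
    exact ⟨l1, l2, e, fun h => p (congrArg Fin.val h), fun h => q (congrArg Fin.val h)⟩

/-! ### Transport of the base case to `S_N` -/

theorem base {N : ℕ} (hN : 5 ≤ N) : Good N 3 v5 := by
  intro x y hy hs
  let f : Fin 5 ≃ {i : Fin N // i.val < 5} :=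
    { toFun := fun i => ⟨⟨i.val, by omega⟩, i.isLt⟩
      invFun := fun i => ⟨i.1.val, i.2⟩
      left_inv := fun i => rfl
      right_inv := fun i => rfl }
  let φ : Perm (Fin 5) →* Perm (Fin N) := extendDomainHom f
  have φlt : ∀ (g : Perm (Fin 5)) (i : Fin 5), φ g (f i).1 = (f (g i)).1 := by
    intro g i
    exact extendDomain_apply_image g f i
  have φge : ∀ (g : Perm (Fin 5)) (i : Fin N), ¬ i.val < 5 → φ g i = i := by
    intro g i hi
    exact extendDomain_apply_not_subtype g f hi
  have φinj : Function.Injective φ := extendDomainHom_injective f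
  have φsign : ∀ g, sign (φ g) = sign g := fun g => sign_extendDomain g f
  have fval : ∀ i, (f i).1.val = i.val := fun i => rfl
  have flift : ∀ i : Fin N, i.val < 5 → ∃ j, (f j).1 = i := fun i hi => ⟨⟨i.val, hi⟩, rfl⟩
  have φsw : ∀ i, i < 4 → φ (sw i) = sw i := by
    intro i hi
    have e1 : (sw i : Perm (Fin 5)) = swap ⟨i, by omega⟩ ⟨i + 1, by omega⟩ := sw_eq _ _ rfl rfl
    have e2 : (sw i : Perm (Fin N)) = swap (f ⟨i, by omega⟩).1 (f ⟨i + 1, by omega⟩).1 :=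
      sw_eq _ _ rfl rfl
    rw [e1, e2]
    ext t
    by_cases ht : t.val < 5
    · obtain ⟨j, rfl⟩ := flift t ht
      rw [φlt]
      have finj : Function.Injective (fun j => (f j).1) :=
        fun a b h => f.injective (Subtype.ext h)
      exact congrArg Fin.val (finj.map_swap _ _ j)
    · rw [φge _ _ ht, swap_apply_of_ne_of_ne]
      · intro h; apply ht; rw [h]; exact (f _).2
      · intro h; apply ht; rw [h]; exact (f _).2
  have φsurj : ∀ σ ∈ Blk 5 x, ∃ g, σ = x * φ g := by
    intro σ hσ
    have hfix : ∀ i : Fin N, ¬ i.val < 5 → (x⁻¹ * σ) i = i := by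
      intro i hi
      rw [Perm.mul_apply, hσ i (by omega)]; simp
    have hst : ∀ i : Fin N, ((x⁻¹ * σ) i).val < 5 ↔ i.val < 5 := by
      intro i
      constructor
      · intro h
        by_contra h'
        rw [hfix i h'] at h
        exact h' h
      · intro h
        by_contra h'
        have h2 := hfix _ h'
        have h3 := (x⁻¹ * σ).injective h2
        rw [h3] at h'
        exact h' h
    refine ⟨f.permCongr.symm ((x⁻¹ * σ).subtypePerm hst), ?_⟩
    ext t
    rw [Perm.mul_apply]
    by_cases ht : t.val < 5
    · obtain ⟨j, rfl⟩ := flift t ht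
      rw [φlt]
      simp
    · rw [φge _ _ ht, hσ t (by omega)]
  have hen : ∀ (l : List ℕ) (σ : Perm (Fin 5)), (∀ i ∈ l, i < 4) →
      en (x * φ σ) l = x * φ (en σ l) ∧ vs (x * φ σ) l = (vs σ l).map (fun g => x * φ g) := by
    intro l
    induction l with
    | nil => intro σ _; exact ⟨rfl, rfl⟩
    | cons i l ih =>
      intro σ h
      have e : x * φ σ * sw i = x * φ (σ * sw i) := by
        rw [map_mul, φsw i (h i (by simp)), mul_assoc]
      obtain ⟨h1, h2⟩ := ih (σ * sw i) (fun j hj => h j (by simp [hj]))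
      exact ⟨by rw [en, en, e, h1], by rw [vs, vs, e, h2, List.map_cons]⟩
  obtain ⟨g, rfl⟩ := φsurj y hy
  have hg : sign g = -1 := by
    rw [Perm.sign_mul, φsign] at hs
    rcases Int.units_eq_one_or (sign g) with h | h
    · rw [h] at hs; simp at hs
    · exact h
  obtain ⟨l, he, hn, hall, hlt, hc, ha⟩ := base5 g hg
  have hx : x = x * φ 1 := by simp
  have h1 := hen l 1 hlt
  rw [← hx] at h1
  refine ⟨l, ⟨by rw [h1.1, he], ?_, ?_⟩, hc, ?_⟩
  · rw [h1.2]
    exact hn.map (fun a b h => φinj (mul_left_cancel h))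
  · intro σ
    rw [h1.2, List.mem_map]
    constructor
    · rintro ⟨τ, -, rfl⟩ i hi
      rw [Perm.mul_apply, φge _ _ (by omega)]
    · intro hσ
      obtain ⟨τ, rfl⟩ := φsurj σ hσ
      exact ⟨τ, hall τ, rfl⟩
  · intro d
    obtain ⟨d', hd'⟩ : ∃ d' : Fin 5, ∀ j : Fin 5, j ≠ d' → x (f j).1 ≠ d := by
      by_cases h : (x⁻¹ d).val < 5
      · obtain ⟨j, hj⟩ := flift _ h
        refine ⟨j, fun i hi h2 => hi ?_⟩
        apply f.injective
        apply Subtype.ext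
        rw [hj, ← h2]; simp
      · refine ⟨0, fun i _ h2 => h ?_⟩
        rw [← h2]; simpa using (f i).2
    obtain ⟨l1, l2, rfl, h3, h4⟩ := ha d'
    refine ⟨l1, l2, rfl, ?_⟩
    have h5 := (hen l1 1 (fun i hi => hlt i (by simp [hi]))).1
    rw [← hx] at h5
    rw [h5]
    rintro i (hi | hi)
    · rw [show i = (f 3).1 from Fin.ext (by rw [hi]; rfl), Perm.mul_apply, φlt]
      exact hd' _ h3
    · rw [show i = (f 4).1 from Fin.ext (by rw [hi]; rfl), Perm.mul_apply, φlt]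
      exact hd' _ h4
theorem good_all {N : ℕ} (k : ℕ) (hk : 3 ≤ k) (hN : k + 2 ≤ N) : ∃ v, Good N k v := by
  induction k, hk using Nat.le_induction with
  | base => exact ⟨v5, base hN⟩
  | succ k hk ih =>
    obtain ⟨v, hv⟩ := ih (by omega)
    exact ⟨_, step hk hN hv⟩

theorem vs_get_zero (x : Perm (Fin N)) (l : List ℕ) :
    (vs x l)[0]'(by rw [vs_length]; omega) = x := by
  cases l <;> simp [vs]

theorem vs_get_last (x : Perm (Fin N)) (l : List ℕ) :
    (vs x l)[l.length]'(by rw [vs_length]; omega) = en x l := by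
  induction l generalizing x with
  | nil => simp [vs, en]
  | cons i l ih => simpa [vs, en] using ih _

theorem vs_get_succ (x : Perm (Fin N)) (l : List ℕ) (j : ℕ) (hj : j < l.length) :
    (vs x l)[j + 1]'(by rw [vs_length]; omega)
      = (vs x l)[j]'(by rw [vs_length]; omega) * sw l[j] := by
  induction l generalizing x j with
  | nil => simp at hj
  | cons i l ih =>
    cases j with
    | zero => simp [vs, vs_get_zero]
    | succ j => simpa [vs] using ih (x * sw i) j (by simpa using hj)

theorem count_card (l : List ℕ) (i : ℕ) :
    (Finset.univ.filter (fun s : Fin (l.length + 1) =>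
      ∃ h : s.val < l.length, l[s.val] = i)).card = l.count i := by
  induction l with
  | nil => simp
  | cons a l ih =>
    rw [List.count_cons, ← ih, Fin.card_filter_univ_succ]
    simp [Nat.add_comm]
    split_ifs <;> omega

theorem sw_inj {i j : ℕ} (hi : i + 1 < N) (_hj : j + 1 < N)
    (h : (sw i : Perm (Fin N)) = sw j) : i = j := by
  have h1 : (sw i : Perm (Fin N)) ⟨i, by omega⟩ = ⟨i + 1, hi⟩ := by
    rw [sw_eq ⟨i, by omega⟩ ⟨i + 1, hi⟩ rfl rfl, swap_apply_left]
  have h2 : (sw i : Perm (Fin N)) ⟨i + 1, hi⟩ = ⟨i, by omega⟩ := by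
    rw [sw_eq ⟨i, by omega⟩ ⟨i + 1, hi⟩ rfl rfl, swap_apply_right]
  by_contra hne
  by_cases h3 : i = j + 1
  · rw [h, sw_other _ (by simp; omega) (by simp; omega), Fin.ext_iff] at h2
    simp at h2
  · rw [h, sw_other _ (by simp; omega) (by simp; omega), Fin.ext_iff] at h1
    simp at h1

/-- what a Hamilton path gives, in the form used by the main statement -/
theorem conv_path {n M : ℕ} {x y : Perm (Fin (n + 1))} {l : List ℕ} (h : HP x y Set.univ l)
    (hM : l.length = M) :
    M + 1 = Nat.factorial (n + 1) ∧ ∃ G : Fin (M + 1) → Perm (Fin (n + 1)),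
      Function.Bijective G ∧ G 0 = x ∧ G (Fin.last M) = y ∧
      (∀ s : Fin (M + 1), (s : ℕ) < M →
        ∃ i : ℕ, ∃ h : i + 1 < n + 1,
          G (s + 1) = G s * Equiv.swap ⟨i, by omega⟩ ⟨i + 1, h⟩) ∧
      (∀ i : ℕ, ∀ h : i + 1 < n + 1,
        (Finset.univ.filter (fun s : Fin (M + 1) =>
          (s : ℕ) < M ∧ G (s + 1) = G s * Equiv.swap ⟨i, by omega⟩ ⟨i + 1, h⟩)).card
        = l.count i) := by
  subst hM
  obtain ⟨e, hn, hm⟩ := h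
  have hlen := vs_length x l
  have hinj : Function.Injective
      (fun s : Fin (l.length + 1) => (vs x l)[s.val]'(by rw [hlen]; exact s.isLt)) := by
    intro a b hab
    exact Fin.ext ((hn.getElem_inj_iff).1 hab)
  have hsurj : Function.Surjective
      (fun s : Fin (l.length + 1) => (vs x l)[s.val]'(by rw [hlen]; exact s.isLt)) := by
    intro σ
    obtain ⟨j, hj, e⟩ := List.getElem_of_mem ((hm σ).2 (Set.mem_univ _))
    exact ⟨⟨j, by omega⟩, e⟩
  have hcol : ∀ j (hj : j < l.length), l[j] + 1 < n + 1 := by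
    intro j hj
    by_contra hh
    have h1 := vs_get_succ x l j hj
    have h2 : (sw l[j] : Perm (Fin (n + 1))) = 1 := by rw [sw, dif_neg hh]
    rw [h2, mul_one] at h1
    have := (hn.getElem_inj_iff).1 h1
    omega
  have hsucc : ∀ s : Fin (l.length + 1), s.val < l.length → (s + 1).val = s.val + 1 := by
    intro s hs
    exact Fin.val_add_one_of_lt (Fin.lt_def.2 (by simpa using hs))
  have hstep : ∀ s : Fin (l.length + 1), ∀ hs : s.val < l.length,
      (vs x l)[(s + 1).val]'(by rw [hlen]; exact (s + 1).isLt)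
        = (vs x l)[s.val]'(by rw [hlen]; exact s.isLt) * sw l[s.val] := by
    intro s hs
    rw [← vs_get_succ x l s.val hs]
    simp only [hsucc s hs]
  refine ⟨?_, fun s => (vs x l)[s.val]'(by rw [hlen]; exact s.isLt), ⟨hinj, hsurj⟩,
    vs_get_zero x l, ?_, ?_, ?_⟩
  · have := Fintype.card_of_bijective ⟨hinj, hsurj⟩
    rw [Fintype.card_fin, Fintype.card_perm, Fintype.card_fin] at this
    exact this
  · rw [← e]; exact vs_get_last x l
  · intro s hs
    refine ⟨l[s.val], hcol _ hs, ?_⟩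
    show (vs x l)[(s + 1).val]'_ = _
    rw [hstep s hs, sw, dif_pos (hcol _ hs)]
  · intro i hi
    rw [← count_card]
    congr 1
    apply Finset.filter_congr
    intro s _
    have hsw : (sw i : Perm (Fin (n + 1))) = swap ⟨i, by omega⟩ ⟨i + 1, hi⟩ := sw_eq _ _ rfl rfl
    rw [← hsw]
    constructor
    · rintro ⟨hs, h⟩
      have h' := hstep s hs
      exact ⟨hs, sw_inj (hcol _ hs) hi (mul_left_cancel (h'.symm.trans h))⟩
    · rintro ⟨hs, h⟩
      refine ⟨hs, ?_⟩
      show (vs x l)[(s + 1).val]'_ = _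
      rw [hstep s hs, h]

theorem two_paths (n : ℕ) (hn : 2 ≤ n) (he : Even n) :
    ∃ l l' : List ℕ, HP (1 : Perm (Fin (n + 1))) (swap 0 1) Set.univ l ∧
      HP (swap 0 1 * finRotate (n + 1)) (finRotate (n + 1))⁻¹ Set.univ l' ∧
      ∀ i, l.count i = l'.count i := by
  by_cases h2 : n = 2
  · subst h2
    refine ⟨[1, 0, 1, 0, 1], [1, 0, 1, 0, 1], ⟨?_, ?_, ?_⟩, ⟨?_, ?_, ?_⟩, fun _ => rfl⟩
    · decide
    · decide
    · simp only [Set.mem_univ, iff_true]; decide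
    · decide
    · decide
    · simp only [Set.mem_univ, iff_true]; decide
  · obtain ⟨k, rfl⟩ : ∃ k, n = k + 1 := ⟨n - 1, by omega⟩
    have hk : 3 ≤ k := by
      obtain ⟨r, hr⟩ := he
      omega
    obtain ⟨v, hv⟩ := good_all (N := k + 2) k hk le_rfl
    have hblk : ∀ x : Perm (Fin (k + 2)), Blk (k + 2) x = Set.univ := by
      intro x
      ext σ
      simp only [Set.mem_univ, iff_true]
      intro i hi
      omega
    have h01 : (0 : Fin (k + 2)) ≠ 1 := by simp
    have hrot : sign (finRotate (k + 2)) = 1 := by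
      rw [sign_finRotate]; exact he.neg_one_pow
    obtain ⟨l, h1, c1, -⟩ := hv 1 (swap 0 1) (by rw [hblk]; trivial)
      (by rw [sign_swap h01, Perm.sign_one]; decide)
    obtain ⟨l', h1', c1', -⟩ := hv (swap 0 1 * finRotate (k + 2)) (finRotate (k + 2))⁻¹
      (by rw [hblk]; trivial)
      (by rw [Perm.sign_mul, sign_swap h01, sign_inv, hrot]; decide)
    exact ⟨l, l', h1.congr (hblk _), h1'.congr (hblk _), fun i => by rw [c1, c1']⟩

end GrayAux


/-- Let `n ≥ 2` be even. Then there exist two Gray codes for `S_{n+1}` under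
adjacent position-swaps: a code `G` from the identity word `123⋯(n+1)` to the word
`213⋯(n+1)` (the permutation `swap 0 1`), and a code `H` from the word `134⋯(n+1)2`
(the permutation `swap 0 1 * finRotate (n+1)`) to the word `(n+1)12⋯n` (the permutation
`(finRotate (n+1))⁻¹`), such that for each `i` the swap of positions `(i, i+1)` is used
the same number of times in `H` as in `G`. -/
theorem two_adjacent_gray_codes (n : ℕ) (hn : 2 ≤ n) (he : Even n) :
    ∃ (N : ℕ) (G H : Fin (N + 1) → Equiv.Perm (Fin (n + 1))),
      N + 1 = Nat.factorial (n + 1) ∧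
      Function.Bijective G ∧
      G 0 = 1 ∧
      G (Fin.last N) = Equiv.swap 0 1 ∧
      (∀ s : Fin (N + 1), (s : ℕ) < N →
        ∃ i : ℕ, ∃ h : i + 1 < n + 1,
          G (s + 1) = G s * Equiv.swap ⟨i, by omega⟩ ⟨i + 1, h⟩) ∧
      Function.Bijective H ∧
      H 0 = Equiv.swap 0 1 * finRotate (n + 1) ∧
      H (Fin.last N) = (finRotate (n + 1))⁻¹ ∧
      (∀ s : Fin (N + 1), (s : ℕ) < N →
        ∃ i : ℕ, ∃ h : i + 1 < n + 1,
          H (s + 1) = H s * Equiv.swap ⟨i, by omega⟩ ⟨i + 1, h⟩) ∧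
      (∀ i : ℕ, ∀ h : i + 1 < n + 1,
        (Finset.univ.filter (fun s : Fin (N + 1) =>
          (s : ℕ) < N ∧ H (s + 1) = H s * Equiv.swap ⟨i, by omega⟩ ⟨i + 1, h⟩)).card
        = (Finset.univ.filter (fun s : Fin (N + 1) =>
          (s : ℕ) < N ∧ G (s + 1) = G s * Equiv.swap ⟨i, by omega⟩ ⟨i + 1, h⟩)).card) := by
  obtain ⟨l, l', h1, h2, hc⟩ := GrayAux.two_paths n hn he
  obtain ⟨hN, G, g1, g2, g3, g4, g5⟩ := GrayAux.conv_path h1 rfl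
  have hlen : l'.length = l.length := (List.perm_iff_count.2 hc).length_eq.symm
  obtain ⟨-, H, k1, k2, k3, k4, k5⟩ := GrayAux.conv_path h2 hlen
  exact ⟨l.length, G, H, hN, g1, g2, g3, g4, k1, k2, k3, k4, fun i h => by
    rw [g5 i h, k5 i h, hc i]⟩
end

section
/- Let n ≥ 45 and set m = ⌊(n−8)/2⌋. Then there exist n binary words w_1, …, w_n of length m such that: (i) any two distinct words w_i, w_j differ in at least 4 positions; (ii) each word w_i has at least 3 blocks; and (iii) each word w_i has a block of length at least 2 that is not its last block. -/
/-- The words: prefix `0010`, then the doubled even-weight word of differences of bits of `2a`. -/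
def lblWord (a p : ℕ) : Bool :=
  if p < 4 then decide (p = 2)
  else (2 * a).testBit ((p - 4) / 2) ^^ (2 * a).testBit ((p - 4) / 2 + 1)

theorem lbl_pow (k : ℕ) (hk : 7 ≤ k) : 4 * k + 19 ≤ 2 ^ (k - 1) := by
  induction k, hk using Nat.le_induction with
  | base => norm_num
  | succ k hk ih =>
    obtain ⟨j, rfl⟩ : ∃ j, k = j + 1 := ⟨k - 1, by omega⟩
    simp only [Nat.add_sub_cancel] at *
    rw [pow_succ]; omega

theorem lbl_two (k a b : ℕ) (hk : 1 ≤ k) (ha : a < 2 ^ (k - 1)) (hb : b < 2 ^ (k - 1))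
    (hab : a ≠ b) : ∃ i l, i < l ∧ l < k ∧
      ((2 * a).testBit i ^^ (2 * a).testBit (i + 1)) ≠
        ((2 * b).testBit i ^^ (2 * b).testBit (i + 1)) ∧
      ((2 * a).testBit l ^^ (2 * a).testBit (l + 1)) ≠
        ((2 * b).testBit l ^^ (2 * b).testBit (l + 1)) := by
  classical
  have hpow : 2 ^ k = 2 * 2 ^ (k - 1) := by
    obtain ⟨j, rfl⟩ : ∃ j, k = j + 1 := ⟨k - 1, by omega⟩
    rw [pow_succ, Nat.add_sub_cancel]; ring
  have hbig : ∀ i, k ≤ i → (2 * a).testBit i = (2 * b).testBit i := by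
    intro i hi
    have h2 : 2 ^ k ≤ 2 ^ i := Nat.pow_le_pow_right (by norm_num) hi
    rw [Nat.testBit_lt_two_pow (by omega), Nat.testBit_lt_two_pow (by omega)]
  have hex : ∃ i, (2 * a).testBit i ≠ (2 * b).testBit i := by
    by_contra! h
    have := Nat.eq_of_testBit_eq h
    omega
  have h0 : (2 * a).testBit 0 = (2 * b).testBit 0 := by simp
  let P : ℕ → Prop := fun i => (2 * a).testBit i ≠ (2 * b).testBit i
  have hex' : ∃ i, P i := hex
  have hm := Nat.find_spec hex'
  have hmin : ∀ i, i < Nat.find hex' → ¬ P i := fun i hi => Nat.find_min hex' hi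
  generalize Nat.find hex' = s at hm hmin
  have hsk : s < k := by
    by_contra h
    exact hm (hbig s (by omega))
  have hs0 : s ≠ 0 := by
    rintro rfl
    exact hm h0
  have hg := Nat.findGreatest_spec (P := P) hsk.le hm
  have hge := Nat.le_findGreatest (P := P) hsk.le hm
  have hmax : ∀ i, Nat.findGreatest P k < i → i ≤ k → ¬ P i :=
    fun i h1 h2 => Nat.findGreatest_is_greatest h1 h2
  generalize Nat.findGreatest P k = l at hg hge hmax
  have hlk : l < k := by
    by_contra h
    exact hg (hbig l (by omega))
  have e1 := hmin (s - 1) (by omega)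
  have e2 := hmax (l + 1) (by omega) (by omega)
  obtain ⟨r, rfl⟩ : ∃ r, s = r + 1 := ⟨s - 1, by omega⟩
  simp only [Nat.add_sub_cancel] at e1
  refine ⟨r, l, by omega, hlk, ?_, ?_⟩
  · simp only [P, not_not] at e1 hm
    rw [e1]; intro h; exact hm (Bool.xor_right_inj.mp h)
  · simp only [P, not_not] at e2 hg
    rw [e2]; intro h; exact hg (Bool.xor_left_inj.mp h)

/-- Let `n ≥ 45` and `m = ⌊(n−8)/2⌋`. Then there exist `n` binary words of
length `m` (encoded as functions `ℕ → Bool`, where only the positions `p < m` matter) such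
that: (i) any two distinct words differ in at least 4 of the positions `p < m`;
(ii) each word has at least 3 blocks, i.e. at least 2 change-points `p` with `p + 1 < m`
and `w p ≠ w (p+1)` (the blocks are the maximal constant intervals, so a word with `c`
change-points has `c + 1` blocks); and (iii) each word has a block of length at least 2
that is not its last block, i.e. there are `p ≤ q` with `q + 1 < m`, `w p = w (p+1)`
(a block of length `≥ 2` containing positions `p, p+1`) and `w q ≠ w (q+1)` (a later
change-point, so that block is not the last one). -/
theorem labels_exist (n : ℕ) (hn : 45 ≤ n) :
    ∃ w : Fin n → ℕ → Bool,
      (∀ a b : Fin n, a ≠ b →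
        4 ≤ ((Finset.range ((n - 8) / 2)).filter (fun p => w a p ≠ w b p)).card) ∧
      (∀ a : Fin n,
        2 ≤ ((Finset.range ((n - 8) / 2 - 1)).filter
          (fun p => w a p ≠ w a (p + 1))).card) ∧
      (∀ a : Fin n, ∃ p q : ℕ, p ≤ q ∧ q + 1 < (n - 8) / 2 ∧
        w a p = w a (p + 1) ∧ w a q ≠ w a (q + 1)) := by

  have hm : 18 ≤ (n - 8) / 2 := by omega
  have hn2 : n ≤ 2 * ((n - 8) / 2) + 9 := by omega
  generalize (n - 8) / 2 = m at hm hn2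
  obtain ⟨k, hk⟩ : ∃ k, k = (m - 4) / 2 := ⟨_, rfl⟩
  have hpow := lbl_pow k (by omega)
  refine ⟨fun a p => lblWord a p, ?_, ?_, ?_⟩
  · intro a b hab
    obtain ⟨i, l, hil, hlk, h1, h2⟩ := lbl_two k a b (by omega) (by omega) (by omega)
      (fun h => hab (Fin.ext h))
    have hw : ∀ (x j e : ℕ), e < 2 → lblWord x (4 + 2 * j + e) =
        ((2 * x).testBit j ^^ (2 * x).testBit (j + 1)) := by
      intro x j e he
      have h3 : (4 + 2 * j + e - 4) / 2 = j := by omega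
      rw [lblWord, if_neg (by omega), h3]
    have hsub : ({4 + 2 * i + 0, 4 + 2 * i + 1, 4 + 2 * l + 0, 4 + 2 * l + 1} : Finset ℕ) ⊆
        (Finset.range m).filter (fun p => lblWord a p ≠ lblWord b p) := by
      intro p hp
      simp only [Finset.mem_insert, Finset.mem_singleton] at hp
      rw [Finset.mem_filter, Finset.mem_range]
      rcases hp with rfl | rfl | rfl | rfl <;> refine ⟨by omega, ?_⟩ <;>
        rw [hw _ _ _ (by norm_num), hw _ _ _ (by norm_num)] <;> assumption
    refine le_trans (le_of_eq ?_) (Finset.card_le_card hsub)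
    rw [Finset.card_insert_of_notMem, Finset.card_insert_of_notMem, Finset.card_pair]
    all_goals (try simp only [Finset.mem_insert, Finset.mem_singleton]); omega
  · intro a
    have hsub : ({1, 2} : Finset ℕ) ⊆
        (Finset.range (m - 1)).filter (fun p => lblWord a p ≠ lblWord a (p + 1)) := by
      intro p hp
      simp only [Finset.mem_insert, Finset.mem_singleton] at hp
      rw [Finset.mem_filter, Finset.mem_range]
      rcases hp with rfl | rfl <;> refine ⟨by omega, ?_⟩ <;> simp [lblWord]
    exact le_trans (by simp) (Finset.card_le_card hsub)
  · intro a
    exact ⟨0, 1, by omega, by omega, by simp [lblWord], by simp [lblWord]⟩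
end
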